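/- arXiv:1201.5334 — 2 statements merged into one kernel-verified Lean document; each statement's English description precedes it below -/
import Mathlib

section
/- Key estimate for the universal uncertainty relation (mixed-state form): for any Hermitian n×n complex matrices N and B and any density matrix ρ, |Tr[(NB − BN)ρ]| ≤ 2·(Tr[N²ρ])^{1/2}·σ(B;ρ). -/
open ComplexOrder

/-- The standard deviation of a Hermitian matrix `B` in the state `ρ`:
`σ(B;ρ)² = Tr[B²ρ] − (Tr[Bρ])²`. -/
noncomputable def stddev {n : ℕ} (B ρ : Matrix (Fin n) (Fin n) ℂ) : ℝ :=
  Real.sqrt ((B * B * ρ).trace.re - ((B * ρ).trace.re) ^ 2)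

/-- Key estimate for the universal uncertainty relation (mixed-state form). -/
theorem commutator_bound_mixed {n : ℕ} (hn : 0 < n)
    (N B ρ : Matrix (Fin n) (Fin n) ℂ)
    (hN : N.IsHermitian) (hB : B.IsHermitian)
    (hρ : ρ.PosSemidef) (hρtr : ρ.trace = 1) :
    ‖((N * B - B * N) * ρ).trace‖ ≤
      2 * Real.sqrt ((N * N * ρ).trace.re) * stddev B ρ := by
  unfold stddev
  set C := ((N * B - B * N) * ρ).trace with hC
  have hstar : star C = -C := by
    rw [hC, ← Matrix.trace_conjTranspose]
    simp only [Matrix.conjTranspose_mul, Matrix.conjTranspose_sub, hN.eq, hB.eq, hρ.1.eq]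
    rw [Matrix.trace_mul_comm, ← Matrix.trace_neg, ← Matrix.neg_mul, neg_sub]
  have hre : C.re = 0 := by
    have := congrArg Complex.re hstar
    simp at this
    linarith
  have hnorm : ‖C‖ = |C.im| := by
    rw [← Complex.abs_im_eq_norm.mpr hre]
  set b := (B * ρ).trace.re with hb
  have hM : (B - (b : ℂ) • (1 : Matrix (Fin n) (Fin n) ℂ)).IsHermitian := by
    unfold Matrix.IsHermitian
    simp [Matrix.conjTranspose_sub, Matrix.conjTranspose_smul, hB.eq]
  have key : ∀ t : ℝ, 0 ≤ ((B * B * ρ).trace.re - b ^ 2) * (t * t) + C.im * t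
      + (N * N * ρ).trace.re := by
    intro t
    set M := B - (b : ℂ) • (1 : Matrix (Fin n) (Fin n) ℂ) with hMd
    have h := (hρ.mul_mul_conjTranspose_same (N - (Complex.I * t) • M)).trace_nonneg
    have hX : (N - (Complex.I * t) • M).conjTranspose = N + (Complex.I * t) • M := by
      simp [Matrix.conjTranspose_sub, Matrix.conjTranspose_smul, hN.eq, hM.eq]
    rw [Matrix.trace_mul_comm, ← Matrix.mul_assoc, hX] at h
    have e : ((N + (Complex.I * t) • M) * (N - (Complex.I * t) • M) * ρ).trace
        = (N * N * ρ).trace - (Complex.I * t) * C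
          + t ^ 2 * ((B * B * ρ).trace - 2 * b * (B * ρ).trace + b ^ 2) := by
      rw [hC, hMd]
      simp only [Matrix.add_mul, Matrix.mul_add, Matrix.sub_mul, Matrix.mul_sub,
        Matrix.smul_mul, Matrix.mul_smul, Matrix.trace_add, Matrix.trace_sub,
        Matrix.trace_smul, smul_eq_mul, Matrix.one_mul, Matrix.mul_one, hρtr, smul_sub]
      linear_combination (-(t : ℂ) ^ 2 * ((B * B * ρ).trace - 2 * b * (B * ρ).trace + b ^ 2)) * Complex.I_sq
    rw [e] at h
    have h2 := (Complex.le_def.mp h).1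
    have e2 : ((t : ℂ) ^ 2 * ((B * B * ρ).trace - 2 * b * (B * ρ).trace + b ^ 2)).re
        = t ^ 2 * ((B * B * ρ).trace.re - 2 * b * b + b ^ 2) := by
      rw [← Complex.ofReal_pow, Complex.re_ofReal_mul, Complex.add_re, Complex.sub_re,
        mul_assoc (2 : ℂ), ← Complex.ofReal_ofNat, Complex.re_ofReal_mul, Complex.re_ofReal_mul,
        ← Complex.ofReal_pow, Complex.ofReal_re, ← hb]
      ring
    rw [Complex.add_re, e2] at h2
    simp at h2
    nlinarith
  have hd := discrim_le_zero key
  unfold discrim at hd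
  have ha : 0 ≤ (N * N * ρ).trace.re := by simpa using key 0
  rw [hnorm, mul_assoc, ← Real.sqrt_mul ha]
  have : |C.im| / 2 ≤ √((N * N * ρ).trace.re * ((B * B * ρ).trace.re - b ^ 2)) := by
    apply Real.le_sqrt_of_sq_le
    rw [div_pow, sq_abs]
    linarith
  linarith
end

section
/- Constraint for non-disturbing measurements: let A, B, N, D be Hermitian n×n complex matrices such that (A + N)(B + D) = (B + D)(A + N), and let ρ be a density matrix with Tr[D²ρ] = 0 (the disturbance of B vanishes). Then (Tr[N²ρ])^{1/2}·σ(B;ρ) ≥ (1/2)·|Tr[(AB − BA)ρ]|. -/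
open ComplexOrder

theorem aux_cs {n : ℕ} (X Y : Matrix (Fin n) (Fin n) ℂ) :
    ‖(X.conjTranspose * Y).trace‖ ≤
      Real.sqrt ((X.conjTranspose * X).trace.re) * Real.sqrt ((Y.conjTranspose * Y).trace.re) := by
  have key : ∀ Z : Matrix (Fin n) (Fin n) ℂ,
      (Z.conjTranspose * Z).trace.re = ∑ p : Fin n × Fin n, ‖Z p.2 p.1‖ ^ 2 := by
    intro Z
    rw [Fintype.sum_prod_type]
    simp only [Matrix.trace, Matrix.diag, Matrix.mul_apply, Matrix.conjTranspose_apply,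
      Complex.re_sum]
    refine Finset.sum_congr rfl fun i _ => Finset.sum_congr rfl fun j _ => ?_
    rw [← Complex.normSq_eq_norm_sq, Complex.normSq_apply]
    simp
  rw [key, key]
  refine le_trans ?_ (Real.sum_mul_le_sqrt_mul_sqrt _ _ _)
  rw [Fintype.sum_prod_type]
  simp only [Matrix.trace, Matrix.diag, Matrix.mul_apply, Matrix.conjTranspose_apply]
  refine (norm_sum_le _ _).trans (Finset.sum_le_sum fun i _ => ?_)
  refine (norm_sum_le _ _).trans (Finset.sum_le_sum fun j _ => ?_)
  simp

/-- Constraint for non-disturbing measurements. -/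
theorem nondisturbing_constraint {n : ℕ} (hn : 0 < n)
    (A B N D ρ : Matrix (Fin n) (Fin n) ℂ)
    (hA : A.IsHermitian) (hB : B.IsHermitian)
    (hN : N.IsHermitian) (hD : D.IsHermitian)
    (hcomm : (A + N) * (B + D) = (B + D) * (A + N))
    (hρ : ρ.PosSemidef) (hρtr : ρ.trace = 1)
    (hdist : (D * D * ρ).trace = 0) :
    Real.sqrt ((N * N * ρ).trace.re) * stddev B ρ ≥
      (1 / 2) * ‖((A * B - B * A) * ρ).trace‖ := by
  obtain ⟨C, rfl⟩ : ∃ C : Matrix (Fin n) (Fin n) ℂ, ρ = C.conjTranspose * C := by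
    open scoped MatrixOrder in
    exact CStarAlgebra.nonneg_iff_eq_star_mul_self.mp hρ.nonneg
  have tr : ∀ U V : Matrix (Fin n) (Fin n) ℂ, U.IsHermitian →
      (U * V * (C.conjTranspose * C)).trace =
        ((U * C.conjTranspose).conjTranspose * (V * C.conjTranspose)).trace := by
    intro U V hU
    rw [Matrix.conjTranspose_mul, hU.eq, Matrix.conjTranspose_conjTranspose,
      ← Matrix.mul_assoc, Matrix.trace_mul_comm]
    simp only [Matrix.mul_assoc]
  have hDC : D * C.conjTranspose = 0 := by
    rw [tr D D hD] at hdist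
    exact Matrix.trace_conjTranspose_mul_self_eq_zero_iff.mp hdist
  have hCD : C * D = 0 := by
    have := congrArg Matrix.conjTranspose hDC
    simpa [hD.eq] using this
  set ρ := C.conjTranspose * C with hρd
  have h1 : D * ρ = 0 := by rw [hρd, ← Matrix.mul_assoc, hDC, Matrix.zero_mul]
  have h2 : ρ * D = 0 := by rw [hρd, Matrix.mul_assoc, hCD, Matrix.mul_zero]
  have z1 : ∀ M : Matrix (Fin n) (Fin n) ℂ, (M * D * ρ).trace = 0 := by
    intro M; rw [Matrix.mul_assoc, h1]; simp
  have z2 : ∀ M : Matrix (Fin n) (Fin n) ℂ, (D * M * ρ).trace = 0 := by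
    intro M; rw [Matrix.mul_assoc, Matrix.trace_mul_comm, Matrix.mul_assoc, h2]; simp
  set b : ℝ := (B * ρ).trace.re with hb
  set B' := B - (b : ℂ) • (1 : Matrix (Fin n) (Fin n) ℂ) with hB'd
  have hB' : B'.IsHermitian := by
    refine hB.sub ?_
    simp [Matrix.IsHermitian, Matrix.conjTranspose_smul]
  have hc : ((A * B - B * A) * ρ).trace = (B' * N * ρ).trace - (N * B' * ρ).trace := by
    have := congrArg (fun M => (M * ρ).trace) hcomm
    simp only [Matrix.add_mul, Matrix.mul_add, Matrix.trace_add, z1, z2] at this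
    simp only [hB'd, Matrix.sub_mul, Matrix.mul_sub, Matrix.trace_sub, Matrix.smul_mul,
      Matrix.mul_smul, Matrix.one_mul, Matrix.mul_one]
    linear_combination this
  have hv : (B' * B' * ρ).trace.re = (B * B * ρ).trace.re - b ^ 2 := by
    simp only [hB'd, Matrix.sub_mul, Matrix.mul_sub, Matrix.trace_sub, Matrix.smul_mul,
      Matrix.mul_smul, Matrix.one_mul, Matrix.mul_one, Matrix.trace_smul, hρtr, smul_eq_mul,
      Complex.sub_re, Complex.re_ofReal_mul, Complex.one_re, ← hb]
    ring
  have e1 := aux_cs (N * C.conjTranspose) (B' * C.conjTranspose)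
  have e2 := aux_cs (B' * C.conjTranspose) (N * C.conjTranspose)
  rw [← tr _ _ hN, ← tr _ _ hN, ← tr _ _ hB'] at e1
  rw [← tr _ _ hN, ← tr _ _ hB', ← tr _ _ hB'] at e2
  unfold stddev
  rw [← hb, ← hv, hc]
  have := norm_sub_le (B' * N * ρ).trace (N * B' * ρ).trace
  linarith [mul_comm (Real.sqrt ((N * N * ρ).trace.re)) (Real.sqrt ((B' * B' * ρ).trace.re))]
end
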